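/- (Oracle skeleton inclusions from principles P1 and P2.) Let G be a directed acyclic graph on V = 𝐗 ∪ 𝐘, unidirectional from 𝐗 to 𝐘. Then Edge(G_𝐗) ⊆ Edge(G_{𝐗|𝐘}) and Edge(G_{𝐘|𝐗}) ⊆ Edge(G_𝐘); consequently the edge density differences satisfy d(𝐗|𝐘) := edgeDens(G_{𝐗|𝐘}) − edgeDens(G_𝐗) ≥ 0 and d(𝐘|𝐗) := edgeDens(G_{𝐘|𝐗}) − edgeDens(G_𝐘) ≤ 0. -/

import Mathlib

/-!
A path with both ends outside a descendant-closed set `C` that nevertheless visits `C` must enter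
`C` along a forward edge and, since no edge leaves `C`, turn around inside `C`: it has a collider in
`C`, all of whose descendants are in `C`. So it is blocked by every set disjoint from `C`, and
dropping `C` from a separating set keeps separation.

Dually, a path with both ends outside an ancestor-closed set `A` that visits `A` must enter `A`
against an edge, so the vertex of entry is a non-collider in `A`. So it is blocked by every set
containing `A`, and adding `A` to a separating set keeps separation.

For a unidirectional partition, `C = 𝐘` and `A = 𝐗`. Descendant-closedness of `C` is
`Unidirectional E Cᶜ C`, ancestor-closedness of `A` is `Unidirectional E A Aᶜ`.
-/

open MeasureTheory ProbabilityTheory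

namespace VecCI

variable {V : Type*}

/-- Undirected adjacency of the edge relation `E`. -/
def Adj (E : V → V → Prop) (u v : V) : Prop := E u v ∨ E v u

/-- `p` is a path from `a` to `b`: a list of pairwise distinct vertices, starting at `a`,
ending at `b`, with at least two vertices, consecutive vertices being adjacent. -/
def IsPath (E : V → V → Prop) (p : List V) (a b : V) : Prop :=
  p.Nodup ∧ 2 ≤ p.length ∧ p.head? = some a ∧ p.getLast? = some b ∧ p.Chain' (Adj E)

/-- Index `i` is an interior position of the path `p`. -/
def Interior (p : List V) (i : ℕ) : Prop := 0 < i ∧ i + 1 < p.length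

/-- The vertex at interior position `i` of `p` is a collider: both adjacent edges point into it. -/
def ColliderAt (E : V → V → Prop) (p : List V) (i : ℕ) : Prop :=
  Interior p i ∧
    ∃ u v w, p[i - 1]? = some u ∧ p[i]? = some v ∧ p[i + 1]? = some w ∧ E u v ∧ E w v

/-- The vertex at interior position `i` of `p` is a non-collider. -/
def NonColliderAt (E : V → V → Prop) (p : List V) (i : ℕ) : Prop :=
  Interior p i ∧ ¬ ColliderAt E p i

/-- `d` is a descendant of `c`: `d = c` or there is a directed path from `c` to `d`. -/
def Descendant (E : V → V → Prop) (c d : V) : Prop := Relation.ReflTransGen E c d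

/-- A set `S` blocks a path `p` if some interior non-collider of `p` lies in `S`, or some
collider of `p` has no descendant in `S`. -/
def Blocked (E : V → V → Prop) (S : Set V) (p : List V) : Prop :=
  (∃ i v, NonColliderAt E p i ∧ p[i]? = some v ∧ v ∈ S) ∨
  (∃ i v, ColliderAt E p i ∧ p[i]? = some v ∧ ∀ d, Descendant E v d → d ∉ S)

/-- `S` d-separates `a` and `b`: every path between them is blocked by `S`. -/
def DSep (E : V → V → Prop) (S : Set V) (a b : V) : Prop :=
  ∀ p : List V, IsPath E p a b → Blocked E S p

/-- `E` admits no directed cycle. -/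
def Acyclic (E : V → V → Prop) : Prop := ∀ v, ¬ Relation.TransGen E v v

/-- `E` has no edge from `Ys` to `Xs`. -/
def Unidirectional (E : V → V → Prop) (Xs Ys : Set V) : Prop :=
  ∀ x ∈ Xs, ∀ y ∈ Ys, ¬ E y x


/-- The skeleton produced by an oracle PC algorithm run on the group `W`: the unordered
pair `{i, j}` of distinct vertices of `W` is an edge iff no `S ⊆ W \ {i, j}` d-separates
`i` and `j` in the full graph. -/
def EdgePlain (E : V → V → Prop) (W : Set V) : Set (Sym2 V) :=
  {e | ∃ i j : V, e = s(i, j) ∧ i ∈ W ∧ j ∈ W ∧ i ≠ j ∧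
    ∀ S : Set V, S ⊆ W \ {i, j} → ¬ DSep E S i j}

/-- The skeleton produced by an oracle PC algorithm run on the group `W` with the other
group `C` added to every conditioning set: `{i, j}` is an edge iff there is no
`S ⊆ W \ {i, j}` such that `S ∪ C` d-separates `i` and `j` in the full graph. -/
def EdgeCond (E : V → V → Prop) (W C : Set V) : Set (Sym2 V) :=
  {e | ∃ i j : V, e = s(i, j) ∧ i ∈ W ∧ j ∈ W ∧ i ≠ j ∧
    ∀ S : Set V, S ⊆ W \ {i, j} → ¬ DSep E (S ∪ C) i j}

/-- Edge density of an edge set `A` over a vertex group `W` with `n = |W|`: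
`|A| / (n (n − 1) / 2)`. -/
noncomputable def edgeDens (A : Set (Sym2 V)) (W : Set V) : ℝ :=
  (A.ncard : ℝ) / ((W.ncard : ℝ) * ((W.ncard : ℝ) - 1) / 2)

variable {E : V → V → Prop} {S W C A : Set V} {p : List V} {a b u v w : V} {i : ℕ}

theorem Unidirectional.mem_of_descendant (hC : Unidirectional E Cᶜ C) (hu : u ∈ C)
    (huv : Descendant E u v) : v ∈ C := by
  induction huv with
  | refl => exact hu
  | tail _ hxy hx => exact not_not.mp fun hy => hC _ hy _ hx hxy

theorem Unidirectional.notMem_of_descendant (hA : Unidirectional E A Aᶜ) (hu : u ∉ A)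
    (huv : Descendant E u v) : v ∉ A :=
  mem_of_descendant (C := Aᶜ) ((compl_compl A).symm ▸ hA) hu huv

theorem IsPath.adj (hp : IsPath E p a b) (hu : p[i]? = some u) (hv : p[i + 1]? = some v) :
    Adj E u v := by
  obtain ⟨-, rfl⟩ := List.getElem?_eq_some_iff.mp hu
  obtain ⟨hi, rfl⟩ := List.getElem?_eq_some_iff.mp hv
  exact List.isChain_iff_getElem.mp hp.2.2.2.2 i hi

theorem IsPath.succ_lt_length (hp : IsPath E p a b) (hv : p[i]? = some v) (hvb : v ≠ b) :
    i + 1 < p.length := by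
  obtain ⟨hi, -⟩ := List.getElem?_eq_some_iff.mp hv
  by_contra hlast
  have hb : p[i]? = some b := by
    rw [← hp.2.2.2.1, List.getLast?_eq_getElem?, show p.length - 1 = i by omega]
  exact hvb (Option.some.inj (hv.symm.trans hb))

theorem IsPath.exists_entry (hp : IsPath E p a b) (ha : a ∉ C) (hv : v ∈ p) (hvC : v ∈ C) :
    ∃ i u w, p[i]? = some u ∧ p[i + 1]? = some w ∧ u ∉ C ∧ w ∈ C := by
  have h_start : ¬ ∃ w, p[0]? = some w ∧ w ∈ C := by
    rintro ⟨w, hw, hwC⟩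
    rw [← List.head?_eq_getElem?, hp.2.2.1] at hw
    exact ha (Option.some.inj hw ▸ hwC)
  obtain ⟨n, hn⟩ := List.mem_iff_getElem?.mp hv
  obtain ⟨i, hi, w, hw, hwC⟩ := Nat.exists_not_and_succ_of_not_zero_of_exists
    (p := fun k => ∃ w, p[k]? = some w ∧ w ∈ C) h_start ⟨n, v, hn, hvC⟩
  obtain ⟨hi_lt, -⟩ := List.getElem?_eq_some_iff.mp hw
  have hu : p[i]? = some p[i] := List.getElem?_eq_getElem (by omega)
  exact ⟨i, p[i], w, hu, hw, fun huC => hi ⟨_, hu, huC⟩, hwC⟩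

theorem colliderAt_succ_iff (hu : p[i]? = some u) (hv : p[i + 1]? = some v)
    (hw : p[i + 1 + 1]? = some w) : ColliderAt E p (i + 1) ↔ E u v ∧ E w v := by
  obtain ⟨hlt, rfl⟩ := List.getElem?_eq_some_iff.mp hw
  simp [ColliderAt, Interior, hu, hv, hlt]

theorem IsPath.exists_collider_mem (hp : IsPath E p a b) (hC : Unidirectional E Cᶜ C)
    (ha : a ∉ C) (hb : b ∉ C) (hv : v ∈ p) (hvC : v ∈ C) :
    ∃ i w, ColliderAt E p i ∧ p[i]? = some w ∧ w ∈ C := by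
  let ForwardInto (i : ℕ) : Prop :=
    ∃ u w, p[i]? = some u ∧ p[i + 1]? = some w ∧ E u w ∧ w ∈ C
  have h_enter : ∃ k, ForwardInto k := by
    obtain ⟨k, u, w, hu, hw, huC, hwC⟩ := hp.exists_entry ha hv hvC
    exact ⟨k, u, w, hu, hw, (hp.adj hu hw).resolve_right (hC u huC w hwC), hwC⟩
  obtain ⟨k, hk⟩ := h_enter
  have h_stop : ¬ ForwardInto (k + p.length) := by
    rintro ⟨u, w, hu, -⟩
    have := (List.getElem?_eq_some_iff.mp hu).1
    omega
  obtain ⟨n, hn, hn_succ⟩ := Nat.exists_not_and_succ_of_not_zero_of_exists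
    (p := fun n => ¬ ForwardInto (k + n)) (not_not.mpr hk) ⟨_, h_stop⟩
  obtain ⟨u, w, hu, hw, huw, hwC⟩ := not_not.mp hn
  have hx := List.getElem?_eq_getElem (hp.succ_lt_length hw (ne_of_mem_of_not_mem hwC hb))
  have hxw := (hp.adj hw hx).resolve_left fun hwx =>
    hn_succ ⟨_, _, hw, hx, hwx, hC.mem_of_descendant hwC (.single hwx)⟩
  exact ⟨k + n + 1, w, (colliderAt_succ_iff hu hw hx).mpr ⟨huw, hxw⟩, hw, hwC⟩

theorem IsPath.exists_nonCollider_mem (hp : IsPath E p a b) (hA : Unidirectional E A Aᶜ)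
    (ha : a ∉ A) (hb : b ∉ A) (hv : v ∈ p) (hvA : v ∈ A) :
    ∃ i w, NonColliderAt E p i ∧ p[i]? = some w ∧ w ∈ A := by
  obtain ⟨i, u, w, hu, hw, huA, hwA⟩ := hp.exists_entry ha hv hvA
  have hi := hp.succ_lt_length hw (ne_of_mem_of_not_mem hwA hb)
  have hx := List.getElem?_eq_getElem hi
  exact ⟨i + 1, w, ⟨⟨i.succ_pos, hi⟩, fun hcol =>
    hA w hwA u huA ((colliderAt_succ_iff hu hw hx).mp hcol).1⟩, hw, hwA⟩

theorem Blocked.of_union (h : Blocked E (S ∪ C) p) (hpC : ∀ v ∈ p, v ∉ C) : Blocked E S p := by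
  rcases h with ⟨i, v, hcol, hv, hvSC⟩ | ⟨i, v, hcol, hv, hdesc⟩
  · exact .inl ⟨i, v, hcol, hv, hvSC.resolve_right (hpC v (List.mem_of_getElem? hv))⟩
  · exact .inr ⟨i, v, hcol, hv, fun d hd hdS => hdesc d hd (.inl hdS)⟩

theorem Blocked.union (h : Blocked E S p) (hA : Unidirectional E A Aᶜ) (hpA : ∀ v ∈ p, v ∉ A) :
    Blocked E (S ∪ A) p := by
  rcases h with ⟨i, v, hcol, hv, hvS⟩ | ⟨i, v, hcol, hv, hdesc⟩
  · exact .inl ⟨i, v, hcol, hv, .inl hvS⟩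
  · have hvA : v ∉ A := hpA v (List.mem_of_getElem? hv)
    exact .inr ⟨i, v, hcol, hv, fun d hd hdSA =>
      hdSA.elim (hdesc d hd) (hA.notMem_of_descendant hvA hd)⟩

theorem DSep.of_union (h : DSep E (S ∪ C) a b) (hC : Unidirectional E Cᶜ C)
    (ha : a ∉ C) (hb : b ∉ C) (hSC : Disjoint S C) : DSep E S a b := by
  intro p hp
  by_cases hpC : ∃ v ∈ p, v ∈ C
  · obtain ⟨v, hv, hvC⟩ := hpC
    obtain ⟨i, w, hcol, hw, hwC⟩ := hp.exists_collider_mem hC ha hb hv hvC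
    exact .inr ⟨i, w, hcol, hw, fun d hd =>
      Set.disjoint_right.mp hSC (hC.mem_of_descendant hwC hd)⟩
  · push Not at hpC
    exact (h p hp).of_union hpC

theorem DSep.union (h : DSep E S a b) (hA : Unidirectional E A Aᶜ) (ha : a ∉ A) (hb : b ∉ A) :
    DSep E (S ∪ A) a b := by
  intro p hp
  by_cases hpA : ∃ v ∈ p, v ∈ A
  · obtain ⟨v, hv, hvA⟩ := hpA
    obtain ⟨i, w, hncol, hw, hwA⟩ := hp.exists_nonCollider_mem hA ha hb hv hvA
    exact .inl ⟨i, w, hncol, hw, .inr hwA⟩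
  · push Not at hpA
    exact (h p hp).union hA hpA

theorem edgePlain_subset_edgeCond (hC : Unidirectional E Cᶜ C) (hWC : Disjoint W C) :
    EdgePlain E W ⊆ EdgeCond E W C := by
  rintro e ⟨i, j, he, hi, hj, hij, hsep⟩
  refine ⟨i, j, he, hi, hj, hij, fun S hS h => hsep S hS ?_⟩
  exact h.of_union hC (Set.disjoint_left.mp hWC hi) (Set.disjoint_left.mp hWC hj)
    (hWC.mono_left (hS.trans Set.sdiff_subset))

theorem edgeCond_subset_edgePlain (hA : Unidirectional E A Aᶜ) (hWA : Disjoint W A) :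
    EdgeCond E W A ⊆ EdgePlain E W := by
  rintro e ⟨i, j, he, hi, hj, hij, hsep⟩
  exact ⟨i, j, he, hi, hj, hij, fun S hS h => hsep S hS
    (h.union hA (Set.disjoint_left.mp hWA hi) (Set.disjoint_left.mp hWA hj))⟩

theorem edgeCond_empty : EdgeCond E W ∅ = EdgePlain E W := by
  simp only [EdgeCond, EdgePlain, Set.union_empty]

theorem finite_edgeCond (hW : W.Finite) : (EdgeCond E W C).Finite := by
  refine (hW.image2 (fun i j => s(i, j)) hW).subset ?_
  rintro e ⟨i, j, rfl, hi, hj, -⟩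
  exact Set.mem_image2_of_mem hi hj

theorem edgeDens_mono {F F' : Set (Sym2 V)} (hF' : F'.Finite) (h : F ⊆ F') :
    edgeDens F W ≤ edgeDens F' W := by
  have h_pairs : (0 : ℝ) ≤ W.ncard * (W.ncard - 1) / 2 := by
    rw [← Nat.cast_choose_two]
    positivity
  have h_card : (F.ncard : ℝ) ≤ F'.ncard := mod_cast Set.ncard_le_ncard h hF'
  exact div_le_div_of_nonneg_right h_card h_pairs

theorem stmt_13_general {Xs Ys : Set V} (hXfin : Xs.Finite) (hYfin : Ys.Finite)
    (hdisj : Disjoint Xs Ys) (hX : Unidirectional E Xs Xsᶜ) (hY : Unidirectional E Ysᶜ Ys) :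
    EdgePlain E Xs ⊆ EdgeCond E Xs Ys ∧
    EdgeCond E Ys Xs ⊆ EdgePlain E Ys ∧
    0 ≤ edgeDens (EdgeCond E Xs Ys) Xs - edgeDens (EdgePlain E Xs) Xs ∧
    edgeDens (EdgeCond E Ys Xs) Ys - edgeDens (EdgePlain E Ys) Ys ≤ 0 := by
  have h_cause : EdgePlain E Xs ⊆ EdgeCond E Xs Ys := edgePlain_subset_edgeCond hY hdisj
  have h_effect : EdgeCond E Ys Xs ⊆ EdgePlain E Ys := edgeCond_subset_edgePlain hX hdisj.symm
  have hYplain : (EdgePlain E Ys).Finite := edgeCond_empty ▸ finite_edgeCond hYfin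
  exact ⟨h_cause, h_effect, sub_nonneg.mpr (edgeDens_mono (finite_edgeCond hXfin) h_cause),
    sub_nonpos.mpr (edgeDens_mono hYplain h_effect)⟩

/-- oracle skeleton inclusions from principles P1 and P2:
`Edge(G_X) ⊆ Edge(G_{X|Y})` and `Edge(G_{Y|X}) ⊆ Edge(G_Y)`; consequently
`d(X|Y) ≥ 0` and `d(Y|X) ≤ 0`. -/
theorem stmt_13 {V : Type*} [Fintype V] (E : V → V → Prop) (Xs Ys : Set V)
    (hcover : Xs ∪ Ys = Set.univ) (hdisj : Disjoint Xs Ys)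
    (hXne : Xs.Nonempty) (hYne : Ys.Nonempty)
    (hirr : Irreflexive E) (hacyc : Acyclic E)
    (huni : Unidirectional E Xs Ys) :
    EdgePlain E Xs ⊆ EdgeCond E Xs Ys ∧
    EdgeCond E Ys Xs ⊆ EdgePlain E Ys ∧
    0 ≤ edgeDens (EdgeCond E Xs Ys) Xs - edgeDens (EdgePlain E Xs) Xs ∧
    edgeDens (EdgeCond E Ys Xs) Ys - edgeDens (EdgePlain E Ys) Ys ≤ 0 := by
  obtain rfl : Xsᶜ = Ys := (IsCompl.mk hdisj (codisjoint_iff.mpr hcover)).compl_eq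
  exact stmt_13_general Xs.toFinite Xsᶜ.toFinite hdisj huni ((compl_compl Xs).symm ▸ huni)

end VecCI
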